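/- arXiv:2103.14109 — 2 statements merged into one kernel-verified Lean document; each statement's English description precedes it below -/
import Mathlib

section
/- For all real parameters x_s, x_q and all x > 0, the derivative of g₀₀ satisfies the identity g₀₀'(x) = (1/x)·(1 − g₀₀(x) + 2·x_q²·(x² − √(1 + x⁴))). -/
/-!
The integrand `1 / √(t⁴ + 1)` is continuous and dominated by `2 / (1 + t²)`, hence integrable on `ℝ`,
so by the fundamental theorem of calculus the tail integral `I(x) = ∫_x^∞ dt / √(t⁴ + 1)` has
derivative `-1 / √(x⁴ + 1)`. Differentiating `g₀₀` with the product and quotient rules, the terms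
in `x_s` and `I` match the right-hand side at once, and the remaining terms agree because
`√(x⁴ + 1)² = x⁴ + 1`.
-/

open Real MeasureTheory

/-- The metric function `f` of the Einstein-Born-Infeld black hole. -/
noncomputable def f (x : ℝ) : ℝ :=
  (2 / 3) * (x ^ 4 - x ^ 2 * Real.sqrt (x ^ 4 + 1))
    + (4 / 3) * x * ∫ t in Set.Ioi x, 1 / Real.sqrt (t ^ 4 + 1)

/-- The time-time metric component `g₀₀(x) = 1 - x_s/x + (x_q^2/x^2) * f x`
of the Einstein-Born-Infeld black hole, in dimensionless variables. -/
noncomputable def g₀₀ (xs xq : ℝ) (x : ℝ) : ℝ :=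
  1 - xs / x + (xq ^ 2 / x ^ 2) * f x

lemma continuous_integrand : Continuous fun t : ℝ => 1 / √(t ^ 4 + 1) := by
  refine continuous_const.div (by fun_prop) fun t => ?_
  positivity

lemma integrable_integrand : Integrable fun t : ℝ => 1 / √(t ^ 4 + 1) := by
  refine (integrable_inv_one_add_sq.const_mul 2).mono'
    continuous_integrand.aestronglyMeasurable (Filter.Eventually.of_forall fun t => ?_)
  have hbound : (1 + t ^ 2) / 2 ≤ √(t ^ 4 + 1) := by
    apply Real.le_sqrt_of_sq_le
    nlinarith [sq_nonneg (t ^ 2 - 1), sq_nonneg (t ^ 2)]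
  rw [Real.norm_of_nonneg (by positivity)]
  calc 1 / √(t ^ 4 + 1) ≤ 1 / ((1 + t ^ 2) / 2) :=
        one_div_le_one_div_of_le (by positivity) hbound
    _ = 2 * (1 + t ^ 2)⁻¹ := by field_simp

lemma hasDerivAt_tail (x : ℝ) :
    HasDerivAt (fun y : ℝ => ∫ t in Set.Ioi y, 1 / √(t ^ 4 + 1)) (-(1 / √(x ^ 4 + 1))) x := by
  have htail : (fun y : ℝ => ∫ t in Set.Ioi y, 1 / √(t ^ 4 + 1)) = fun y =>
      (∫ t in Set.Ioi (0 : ℝ), 1 / √(t ^ 4 + 1)) - ∫ t in (0 : ℝ)..y, 1 / √(t ^ 4 + 1) := by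
    funext y
    have h := intervalIntegral.integral_interval_add_Ioi (a := 0) (b := y)
      integrable_integrand.integrableOn integrable_integrand.integrableOn
    linarith
  rw [htail]
  exact (intervalIntegral.integral_hasDerivAt_right
    (continuous_integrand.intervalIntegrable _ _)
    (continuous_integrand.stronglyMeasurableAtFilter _ _)
    continuous_integrand.continuousAt).const_sub _

/-- For all parameters `x_s, x_q` and all `x > 0`,
`g₀₀'(x) = (1/x) * (1 - g₀₀(x) + 2*x_q^2*(x^2 - sqrt(1+x^4)))`. -/
theorem deriv_g₀₀_identity (xs xq : ℝ) (x : ℝ) (hx : 0 < x) :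
    deriv (g₀₀ xs xq) x
      = (1 / x) * (1 - g₀₀ xs xq x + 2 * xq ^ 2 * (x ^ 2 - Real.sqrt (1 + x ^ 4))) := by
  have hspos : 0 < √(x ^ 4 + 1) := by positivity
  have hsq : √(x ^ 4 + 1) ^ 2 = x ^ 4 + 1 := Real.sq_sqrt (by positivity)
  have hpow (n : ℕ) : HasDerivAt (fun y : ℝ => y ^ n) (n * x ^ (n - 1)) x := hasDerivAt_pow n x
  have hsqrt := ((hpow 4).add_const 1).sqrt (by positivity)
  have hf := (((hpow 4).sub ((hpow 2).mul hsqrt)).const_mul (2 / 3)).add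
    (((hasDerivAt_id x).const_mul (4 / 3)).mul (hasDerivAt_tail x))
  have hg := (((hasDerivAt_const x xs).div (hasDerivAt_id x) hx.ne').const_sub 1).add
    (((hasDerivAt_const x (xq ^ 2)).div (hpow 2) (by positivity)).mul hf)
  have hderiv := HasDerivAt.deriv (f := g₀₀ xs xq) hg
  rw [hderiv]
  simp only [g₀₀, f, add_comm 1 (x ^ 4), id, Pi.mul_apply, Pi.add_apply, Pi.sub_apply,
    Pi.div_apply]
  generalize (∫ t in Set.Ioi x, 1 / √(t ^ 4 + 1)) = I
  -- As an atom, the square root is known only through `hspos` and `hsq`.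
  generalize √(x ^ 4 + 1) = s at *
  field_simp
  norm_num
  ring_nf
  linear_combination (4 * x ^ 2 * xq ^ 2) * hsq
end

section
/- Let x_s, x_q be real parameters with x_s > x_q²·Γ(1/4)²/(3√π). Then g₀₀ is strictly monotonically increasing on (0, ∞) and has exactly one zero x_h ∈ (0, ∞) (a Schwarzschild-like black hole has a single horizon). -/
/-!
The constant `Γ(1/4)² / (3√π)` is `(4/3) I₀`, where `I₀ = ∫₀^∞ dt / √(t⁴ + 1)`
(`integral_bornInfeld`). This value comes from writing `√π / √(t⁴ + 1)` as the Gamma integral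
`∫₀^∞ s^(-1/2) exp (-(1 + t⁴) s) ds` and exchanging the order of integration.

Splitting `∫_x^∞ = I₀ - ∫_0^x` and rescaling the second integral to `[0, 1]` gives, for `x > 0`
(`g₀₀_eq`),

  `g₀₀ x = 1 - A / x + x_q² ((2/3) (x² - √(x⁴ + 1)) - (4/3) ∫₀¹ du / √((x u)⁴ + 1))`,

with `A = x_s - (4/3) x_q² I₀ > 0`. Here `-A / x` is strictly increasing, and
`x² - √(x⁴ + 1) = -1 / (x² + √(x⁴ + 1))` as well as the negated integral are nondecreasing,
so `g₀₀` is strictly increasing without any differentiation. The bracket is nonpositive, so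
`g₀₀ A ≤ 0`; the bound `g₀₀ x ≥ 1 - (x_s + x_q²) / x` for `x ≥ 1` makes `g₀₀` positive for large `x`,
and the intermediate value theorem produces the zero.
-/

open Real MeasureTheory

lemma continuous_bornInfeld : Continuous fun t : ℝ => 1 / Real.sqrt (t ^ 4 + 1) :=
  continuous_const.div (by fun_prop) fun t => by positivity

lemma integrable_bornInfeld : Integrable fun t : ℝ => 1 / Real.sqrt (t ^ 4 + 1) := by
  refine (integrable_inv_one_add_sq.const_mul 2).mono'
    continuous_bornInfeld.aestronglyMeasurable (Filter.Eventually.of_forall fun t => ?_)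
  have hle : (1 + t ^ 2) / 2 ≤ Real.sqrt (t ^ 4 + 1) :=
    Real.le_sqrt_of_sq_le (by nlinarith [sq_nonneg (t ^ 2 - 1), sq_nonneg (t ^ 2)])
  rw [Real.norm_of_nonneg (by positivity)]
  calc 1 / Real.sqrt (t ^ 4 + 1) ≤ 1 / ((1 + t ^ 2) / 2) :=
        one_div_le_one_div_of_le (by positivity) hle
    _ = 2 * (1 + t ^ 2)⁻¹ := by field_simp

/-- The Gamma integral representing the integrand, the `s`-integral of the two-variable kernel. -/
lemma integral_kernel_left (t : ℝ) :
    ∫ s in Set.Ioi (0 : ℝ), s ^ (1 / 2 - 1 : ℝ) * exp (-((t ^ 4 + 1) * s)) =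
      Real.sqrt π * (1 / Real.sqrt (t ^ 4 + 1)) := by
  have ht : 0 < t ^ 4 + 1 := by positivity
  rw [Real.integral_rpow_mul_exp_neg_mul_Ioi (by norm_num) ht, Real.Gamma_one_half_eq,
    ← Real.sqrt_eq_rpow, Real.sqrt_div zero_le_one, Real.sqrt_one, mul_comm]

/-- The `t`-integral of the same kernel. -/
lemma integral_kernel_right {s : ℝ} (hs : 0 < s) :
    ∫ t in Set.Ioi (0 : ℝ), s ^ (1 / 2 - 1 : ℝ) * exp (-((t ^ 4 + 1) * s)) =
      (Real.Gamma (1 / 4) / 4) * (exp (-s) * s ^ (1 / 4 - 1 : ℝ)) := by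
  have h1 := integral_exp_neg_mul_rpow (p := 4) (by norm_num) hs
  have h2 : ∀ t : ℝ, s ^ (1 / 2 - 1 : ℝ) * exp (-((t ^ 4 + 1) * s)) =
      (s ^ (1 / 2 - 1 : ℝ) * exp (-s)) * exp (-s * t ^ (4 : ℝ)) := fun t => by
    rw [mul_assoc, ← Real.exp_add, show (4 : ℝ) = ((4 : ℕ) : ℝ) by norm_num, Real.rpow_natCast]
    congr 2
    ring
  have h3 : s ^ (1 / 4 - 1 : ℝ) = s ^ (1 / 2 - 1 : ℝ) * s ^ (-1 / 4 : ℝ) := by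
    rw [← Real.rpow_add hs]; norm_num
  simp_rw [h2]
  rw [integral_const_mul, h1, Real.Gamma_add_one (by norm_num), h3]
  ring

lemma integral_bornInfeld :
    ∫ t in Set.Ioi (0 : ℝ), 1 / Real.sqrt (t ^ 4 + 1) =
      Real.Gamma (1 / 4) ^ 2 / (4 * Real.sqrt π) := by
  set μ : Measure ℝ := volume.restrict (Set.Ioi (0 : ℝ)) with hμ
  have hint : Integrable (Function.uncurry fun t s : ℝ =>
      s ^ (1 / 2 - 1 : ℝ) * exp (-((t ^ 4 + 1) * s))) (μ.prod μ) := by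
    have hm : AEStronglyMeasurable (Function.uncurry fun t s : ℝ =>
        s ^ (1 / 2 - 1 : ℝ) * exp (-((t ^ 4 + 1) * s))) (μ.prod μ) := by
      apply Measurable.aestronglyMeasurable
      unfold Function.uncurry
      fun_prop
    rw [integrable_prod_iff hm]
    refine ⟨Filter.Eventually.of_forall fun t => ?_, ?_⟩
    · have := integrableOn_rpow_mul_exp_neg_mul_rpow (p := 1) (s := 1 / 2 - 1) (b := t ^ 4 + 1)
        (by norm_num) one_pos (by positivity)
      simpa only [Function.uncurry, Real.rpow_one, neg_mul] using this.integrable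
    · refine ((integrable_bornInfeld.restrict (s := Set.Ioi 0)).const_mul (Real.sqrt π)).congr
        (Filter.Eventually.of_forall fun t => ?_)
      beta_reduce
      rw [← integral_kernel_left t]
      refine setIntegral_congr_fun measurableSet_Ioi fun s hs => ?_
      have hs' : 0 < s := hs
      exact (Real.norm_of_nonneg (by positivity)).symm
  have hswap := integral_integral_swap hint
  simp_rw [hμ, integral_kernel_left] at hswap
  rw [setIntegral_congr_fun measurableSet_Ioi fun s hs => integral_kernel_right hs,
    integral_const_mul, integral_const_mul, ← Real.Gamma_eq_integral (by norm_num)] at hswap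
  have hpi : 0 < Real.sqrt π := Real.sqrt_pos.mpr Real.pi_pos
  rw [eq_div_iff (by positivity)]
  linarith

lemma integral_Ioi_bornInfeld (x : ℝ) :
    ∫ t in Set.Ioi x, 1 / Real.sqrt (t ^ 4 + 1) =
      Real.Gamma (1 / 4) ^ 2 / (4 * Real.sqrt π) - ∫ t in (0 : ℝ)..x, 1 / Real.sqrt (t ^ 4 + 1) := by
  rw [← integral_bornInfeld, ← intervalIntegral.integral_interval_add_Ioi (a := 0) (b := x)
    integrable_bornInfeld.integrableOn integrable_bornInfeld.integrableOn]
  ring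

/-- The decomposition of `g₀₀` into a strictly increasing term and nondecreasing terms. -/
lemma g₀₀_eq (xs xq : ℝ) {x : ℝ} (hx : 0 < x) :
    g₀₀ xs xq x = 1 - (xs - xq ^ 2 * (Real.Gamma (1 / 4) ^ 2 / (3 * Real.sqrt π))) / x
      + xq ^ 2 * ((2 / 3) * (x ^ 2 - Real.sqrt (x ^ 4 + 1))
        - (4 / 3) * ∫ u in (0 : ℝ)..1, 1 / Real.sqrt ((x * u) ^ 4 + 1)) := by
  have hpi : 0 < Real.sqrt π := Real.sqrt_pos.mpr Real.pi_pos
  have hscale := intervalIntegral.mul_integral_comp_mul_left (a := 0) (b := 1)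
    (f := fun t : ℝ => 1 / Real.sqrt (t ^ 4 + 1)) (c := x)
  rw [mul_zero, mul_one] at hscale
  rw [g₀₀, f, integral_Ioi_bornInfeld, ← hscale]
  field_simp
  ring

lemma sq_sub_sqrt_eq (x : ℝ) :
    x ^ 2 - Real.sqrt (x ^ 4 + 1) = -(1 / (x ^ 2 + Real.sqrt (x ^ 4 + 1))) := by
  have h0 : 0 < Real.sqrt (x ^ 4 + 1) := by positivity
  have h1 : Real.sqrt (x ^ 4 + 1) ^ 2 = x ^ 4 + 1 := Real.sq_sqrt (by positivity)
  field_simp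
  linear_combination -h1

lemma sq_sub_sqrt_mono {x y : ℝ} (hx : 0 < x) (hxy : x ≤ y) :
    x ^ 2 - Real.sqrt (x ^ 4 + 1) ≤ y ^ 2 - Real.sqrt (y ^ 4 + 1) := by
  rw [sq_sub_sqrt_eq, sq_sub_sqrt_eq]
  gcongr

lemma integral_scaled_anti {x y : ℝ} (hx : 0 < x) (hxy : x ≤ y) :
    ∫ u in (0 : ℝ)..1, 1 / Real.sqrt ((y * u) ^ 4 + 1) ≤
      ∫ u in (0 : ℝ)..1, 1 / Real.sqrt ((x * u) ^ 4 + 1) := by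
  have hc : ∀ z : ℝ, Continuous fun u : ℝ => 1 / Real.sqrt ((z * u) ^ 4 + 1) := fun z =>
    continuous_bornInfeld.comp (continuous_const.mul continuous_id)
  refine intervalIntegral.integral_mono_on zero_le_one ((hc y).intervalIntegrable 0 1)
    ((hc x).intervalIntegrable 0 1) fun u hu => ?_
  have := hu.1
  gcongr

lemma continuousOn_g₀₀ (xs xq : ℝ) : ContinuousOn (g₀₀ xs xq) (Set.Ioi 0) := by
  have hP : Continuous fun x : ℝ => ∫ t in (0 : ℝ)..x, 1 / Real.sqrt (t ^ 4 + 1) :=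
    intervalIntegral.continuous_primitive
      (fun a b => continuous_bornInfeld.intervalIntegrable a b) 0
  have hf : Continuous f := by
    unfold f
    simp_rw [integral_Ioi_bornInfeld]
    fun_prop
  unfold g₀₀
  have hne : ∀ x ∈ Set.Ioi (0 : ℝ), x ≠ 0 := fun x hx => ne_of_gt hx
  exact (continuousOn_const.sub (continuousOn_const.div continuousOn_id hne)).add
    ((continuousOn_const.div (by fun_prop) fun x hx => pow_ne_zero 2 (hne x hx)).mul
      hf.continuousOn)

/-- A lower bound for `g₀₀`, obtained by dropping the nonnegative tail integral and using
`x² - √(x⁴ + 1) ≥ -1 / x` for `x ≥ 1`. -/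
lemma g₀₀_lower (xs xq : ℝ) {x : ℝ} (hx : 1 ≤ x) :
    1 - (xs + xq ^ 2) / x ≤ g₀₀ xs xq x := by
  have hx0 : 0 < x := by linarith
  have hJ : 0 ≤ ∫ t in Set.Ioi x, 1 / Real.sqrt (t ^ 4 + 1) :=
    integral_nonneg fun t => by positivity
  have hs : -(1 / x) ≤ x ^ 2 - Real.sqrt (x ^ 4 + 1) := by
    rw [sq_sub_sqrt_eq]
    gcongr
    nlinarith [Real.sqrt_nonneg (x ^ 4 + 1)]
  have heq : g₀₀ xs xq x = 1 - (xs + xq ^ 2) / x + xq ^ 2 * ((1 / x) * (1 / 3)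
      + (2 / 3) * (x ^ 2 - Real.sqrt (x ^ 4 + 1) + 1 / x)
      + (4 / 3) * (1 / x) * ∫ t in Set.Ioi x, 1 / Real.sqrt (t ^ 4 + 1)) := by
    rw [g₀₀, f]
    field_simp
    ring
  rw [heq]
  have h1 : 0 ≤ x ^ 2 - Real.sqrt (x ^ 4 + 1) + 1 / x := by linarith
  have : 0 ≤ xq ^ 2 * ((1 / x) * (1 / 3)
      + (2 / 3) * (x ^ 2 - Real.sqrt (x ^ 4 + 1) + 1 / x)
      + (4 / 3) * (1 / x) * ∫ t in Set.Ioi x, 1 / Real.sqrt (t ^ 4 + 1)) := by positivity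
  linarith

/-- If `x_s > x_q^2 * Gamma(1/4)^2/(3*sqrt(pi))` then `g₀₀` is strictly increasing
on `(0, oo)` and has exactly one zero there (a single horizon). -/
theorem g₀₀_schwarzschild_like (xs xq : ℝ)
    (h : xs > xq ^ 2 * (Real.Gamma (1 / 4) ^ 2 / (3 * Real.sqrt π))) :
    StrictMonoOn (g₀₀ xs xq) (Set.Ioi (0 : ℝ)) ∧
    ∃! x : ℝ, 0 < x ∧ g₀₀ xs xq x = 0 := by
  have hmono : StrictMonoOn (g₀₀ xs xq) (Set.Ioi (0 : ℝ)) := by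
    intro x hx y hy hxy
    have hx0 : 0 < x := hx
    rw [g₀₀_eq xs xq hx, g₀₀_eq xs xq hy]
    have h1 := sq_sub_sqrt_mono hx hxy.le
    have h2 := integral_scaled_anti hx hxy.le
    have h3 := div_lt_div_of_pos_left (sub_pos.mpr h) hx0 hxy
    have h4 := mul_le_mul_of_nonneg_left
      (sub_le_sub (mul_le_mul_of_nonneg_left h1 (by norm_num : (0 : ℝ) ≤ 2 / 3))
        (mul_le_mul_of_nonneg_left h2 (by norm_num : (0 : ℝ) ≤ 4 / 3))) (sq_nonneg xq)
    linarith
  refine ⟨hmono, ?_⟩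
  set A := xs - xq ^ 2 * (Real.Gamma (1 / 4) ^ 2 / (3 * Real.sqrt π)) with hA
  have hApos : 0 < A := sub_pos.mpr h
  have hAle : A ≤ xs := sub_le_self _ (by positivity)
  have hlow : g₀₀ xs xq A ≤ 0 := by
    rw [g₀₀_eq xs xq hApos, ← hA, div_self hApos.ne', sub_self, zero_add]
    refine mul_nonpos_of_nonneg_of_nonpos (sq_nonneg xq) ?_
    have h1 : A ^ 2 - Real.sqrt (A ^ 4 + 1) ≤ 0 := by
      rw [sq_sub_sqrt_eq]
      exact neg_nonpos.mpr (by positivity)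
    have h2 : 0 ≤ ∫ u in (0 : ℝ)..1, 1 / Real.sqrt ((A * u) ^ 4 + 1) :=
      intervalIntegral.integral_nonneg zero_le_one fun u _ => by positivity
    linarith
  have hq := sq_nonneg xq
  have hhigh : 0 ≤ g₀₀ xs xq (xs + xq ^ 2 + 1) := by
    refine le_trans ?_ (g₀₀_lower xs xq (by linarith))
    rw [sub_nonneg, div_le_one (by linarith)]
    linarith
  obtain ⟨x, hx, hx0⟩ := intermediate_value_Icc (by linarith : A ≤ xs + xq ^ 2 + 1)
    ((continuousOn_g₀₀ xs xq).mono fun z hz => lt_of_lt_of_le hApos hz.1) ⟨hlow, hhigh⟩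
  have hxpos : 0 < x := lt_of_lt_of_le hApos hx.1
  exact ⟨x, ⟨hxpos, hx0⟩, fun y hy => hmono.injOn hy.1 hxpos (hy.2.trans hx0.symm)⟩
end
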